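/- arXiv:2309.03515 — 2 statements merged into one kernel-verified Lean document; each statement's English description precedes it below -/
import Mathlib

section
/- Let n ≥ 2 and let σ(x) = −eₙ + 2(x + eₙ)/|x + eₙ|² be the inversion in the sphere S^{n−1}(−eₙ, √2), which maps 𝔹ⁿ onto ℍⁿ with σ(0) = eₙ. Then for all x, y ∈ 𝔹ⁿ and all c > 0: h_{ℍⁿ,c}(σ(x), σ(y)) = log(1 + 2c·|x − y|/√((1 − |x|²)(1 − |y|²))). -/
noncomputable section

open Real Filter

/-- The hyperbolic-type metric `h_{𝔹ⁿ,c}` on the unit ball. -/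
def hB {n : ℕ} (c : ℝ) (x y : EuclideanSpace ℝ (Fin n)) : ℝ :=
  Real.log (1 + c * ‖x - y‖ / Real.sqrt ((1 - ‖x‖) * (1 - ‖y‖)))

/-- The n-th (last) coordinate of a point of `ℝⁿ`. -/
def lastCoord {n : ℕ} (x : EuclideanSpace ℝ (Fin n)) : ℝ :=
  if h : 0 < n then x ⟨n - 1, Nat.sub_lt h one_pos⟩ else 0

/-- The hyperbolic-type metric `h_{ℍⁿ,c}` on the upper half space. -/
def hH {n : ℕ} (c : ℝ) (x y : EuclideanSpace ℝ (Fin n)) : ℝ :=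
  Real.log (1 + c * ‖x - y‖ / Real.sqrt (lastCoord x * lastCoord y))

/-- The hyperbolic-type metric `h_{𝔹ⁿ\{p},c}` on the punctured unit ball. -/
def hP {n : ℕ} (c : ℝ) (p x y : EuclideanSpace ℝ (Fin n)) : ℝ :=
  Real.log (1 + c * ‖x - y‖ /
    Real.sqrt (min ‖x - p‖ (1 - ‖x‖) * min ‖y - p‖ (1 - ‖y‖)))

/-- The inversion `σ_a` in the sphere `S^{n-1}(a*, r)`, `a* = a/|a|²`, `r² = 1/|a|² - 1`. -/
def sigmaInv {n : ℕ} (a x : EuclideanSpace ℝ (Fin n)) : EuclideanSpace ℝ (Fin n) :=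
  (‖a‖ ^ 2)⁻¹ • a +
    (((‖a‖ ^ 2)⁻¹ - 1) / ‖x - (‖a‖ ^ 2)⁻¹ • a‖ ^ 2) • (x - (‖a‖ ^ 2)⁻¹ • a)

/-- The last standard basis vector `eₙ` of `ℝⁿ`. -/
def eLast (n : ℕ) : EuclideanSpace ℝ (Fin n) :=
  if h : 0 < n then EuclideanSpace.single ⟨n - 1, Nat.sub_lt h one_pos⟩ 1 else 0

/-- The first standard basis vector `e₁` of `ℝⁿ`. -/
def eFirst (n : ℕ) : EuclideanSpace ℝ (Fin n) :=
  if h : 0 < n then EuclideanSpace.single ⟨0, h⟩ 1 else 0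

/-- The inversion `σ` in the sphere `S^{n-1}(-eₙ, √2)`, mapping `𝔹ⁿ` onto `ℍⁿ`. -/
def sigmaBH {n : ℕ} (x : EuclideanSpace ℝ (Fin n)) : EuclideanSpace ℝ (Fin n) :=
  -eLast n + (2 / ‖x + eLast n‖ ^ 2) • (x + eLast n)

/-!
The inversion `σ` in the sphere of centre `-e` and radius `√2 |e|` satisfies
`|σ x - σ y| = 2 |e|² |x - y| / (|x + e| |y + e|)` and
`⟪σ x, e⟫ = |e|² (|e|² - |x|²) / |x + e|²`. Hence the factors `|x + e|` and `|y + e|` cancel in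
`|σ x - σ y| / √(⟪σ x, e⟫ ⟪σ y, e⟫)`.
-/

section Inversion

open EuclideanGeometry

variable {V : Type*} [NormedAddCommGroup V] [InnerProductSpace ℝ V] {e x y : V}

/-- The inversion exchanging the ball of radius `‖e‖` about the origin with the half-space
`{x | 0 < ⟪x, e⟫}`, for `e ≠ 0`; it agrees with `sigmaBH` when `e` is the last basis vector. -/
def ballHalfSpaceInversion (e x : V) : V :=
  inversion (-e) (√2 * ‖e‖) x

theorem sq_sqrt_two_mul (r : ℝ) : (√2 * r) ^ 2 = 2 * r ^ 2 := by
  rw [mul_pow, Real.sq_sqrt zero_le_two]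

theorem ballHalfSpaceInversion_eq (e x : V) :
    ballHalfSpaceInversion e x = -e + (2 * ‖e‖ ^ 2 / ‖x + e‖ ^ 2) • (x + e) := by
  rw [ballHalfSpaceInversion, inversion, div_pow, sq_sqrt_two_mul, dist_eq_norm, vsub_eq_sub,
    vadd_eq_add, sub_neg_eq_add, add_comm]

theorem inner_ballHalfSpaceInversion (hx : x ≠ -e) :
    inner ℝ (ballHalfSpaceInversion e x) e =
      ‖e‖ ^ 2 * (‖e‖ ^ 2 - ‖x‖ ^ 2) / ‖x + e‖ ^ 2 := by
  have hnorm_ne : ‖x + e‖ ≠ 0 := norm_ne_zero_iff.mpr (hx ∘ eq_neg_of_add_eq_zero_left)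
  rw [ballHalfSpaceInversion_eq, inner_add_left, inner_neg_left, real_inner_smul_left,
    inner_add_left, real_inner_self_eq_norm_sq]
  field_simp
  linear_combination -‖e‖ ^ 2 * norm_add_sq_real x e

theorem dist_ballHalfSpaceInversion (hx : x ≠ -e) (hy : y ≠ -e) :
    dist (ballHalfSpaceInversion e x) (ballHalfSpaceInversion e y) =
      ‖e‖ ^ 2 / (‖x + e‖ * ‖y + e‖) * (2 * dist x y) := by
  rw [ballHalfSpaceInversion, ballHalfSpaceInversion, dist_inversion_inversion hx hy,
    sq_sqrt_two_mul, dist_eq_norm x (-e), dist_eq_norm y (-e), sub_neg_eq_add, sub_neg_eq_add]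
  ring

theorem sqrt_inner_ballHalfSpaceInversion_mul (hx : x ≠ -e) (hy : y ≠ -e) :
    √(inner ℝ (ballHalfSpaceInversion e x) e * inner ℝ (ballHalfSpaceInversion e y) e) =
      ‖e‖ ^ 2 / (‖x + e‖ * ‖y + e‖) * √((‖e‖ ^ 2 - ‖x‖ ^ 2) * (‖e‖ ^ 2 - ‖y‖ ^ 2)) := by
  calc √(inner ℝ (ballHalfSpaceInversion e x) e * inner ℝ (ballHalfSpaceInversion e y) e)
    _ = √((‖e‖ ^ 2 / (‖x + e‖ * ‖y + e‖)) ^ 2 *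
          ((‖e‖ ^ 2 - ‖x‖ ^ 2) * (‖e‖ ^ 2 - ‖y‖ ^ 2))) := by
      rw [inner_ballHalfSpaceInversion hx, inner_ballHalfSpaceInversion hy]
      ring_nf
    _ = ‖e‖ ^ 2 / (‖x + e‖ * ‖y + e‖) *
          √((‖e‖ ^ 2 - ‖x‖ ^ 2) * (‖e‖ ^ 2 - ‖y‖ ^ 2)) := by
      rw [Real.sqrt_mul (sq_nonneg _), Real.sqrt_sq (by positivity)]

theorem dist_ballHalfSpaceInversion_div_sqrt_inner_mul_inner
    (he : e ≠ 0) (hx : x ≠ -e) (hy : y ≠ -e) :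
    dist (ballHalfSpaceInversion e x) (ballHalfSpaceInversion e y) /
        √(inner ℝ (ballHalfSpaceInversion e x) e * inner ℝ (ballHalfSpaceInversion e y) e) =
      2 * dist x y / √((‖e‖ ^ 2 - ‖x‖ ^ 2) * (‖e‖ ^ 2 - ‖y‖ ^ 2)) := by
  have hxe : x + e ≠ 0 := hx ∘ eq_neg_of_add_eq_zero_left
  have hye : y + e ≠ 0 := hy ∘ eq_neg_of_add_eq_zero_left
  have hscale_ne : ‖e‖ ^ 2 / (‖x + e‖ * ‖y + e‖) ≠ 0 := by positivity
  rw [dist_ballHalfSpaceInversion hx hy, sqrt_inner_ballHalfSpaceInversion_mul hx hy,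
    mul_div_mul_left _ _ hscale_ne]

end Inversion

section HalfSpace

variable {n : ℕ}

theorem norm_eLast (hn : 0 < n) : ‖eLast n‖ = 1 := by
  simp [eLast, hn]

theorem lastCoord_eq_inner_eLast (x : EuclideanSpace ℝ (Fin n)) :
    lastCoord x = inner ℝ x (eLast n) := by
  by_cases hn : 0 < n <;> simp [lastCoord, eLast, hn, EuclideanSpace.inner_single_right]

theorem ballHalfSpaceInversion_eLast (hn : 0 < n) (x : EuclideanSpace ℝ (Fin n)) :
    ballHalfSpaceInversion (eLast n) x = sigmaBH x := by
  rw [ballHalfSpaceInversion_eq, sigmaBH, norm_eLast hn, one_pow, mul_one]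

theorem norm_sigmaBH_sub_div_sqrt_lastCoord (hn : 0 < n) {x y : EuclideanSpace ℝ (Fin n)}
    (hx : x ≠ -eLast n) (hy : y ≠ -eLast n) :
    ‖sigmaBH x - sigmaBH y‖ / √(lastCoord (sigmaBH x) * lastCoord (sigmaBH y)) =
      2 * ‖x - y‖ / √((1 - ‖x‖ ^ 2) * (1 - ‖y‖ ^ 2)) := by
  have he : eLast n ≠ 0 := norm_ne_zero_iff.mp (by simp [norm_eLast hn])
  simpa only [ballHalfSpaceInversion_eLast hn, ← lastCoord_eq_inner_eLast, norm_eLast hn, one_pow,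
    dist_eq_norm] using dist_ballHalfSpaceInversion_div_sqrt_inner_mul_inner he hx hy

theorem ne_neg_eLast_of_norm_ne_one (hn : 0 < n) {x : EuclideanSpace ℝ (Fin n)}
    (hx : ‖x‖ ≠ 1) : x ≠ -eLast n := by
  rintro rfl
  exact hx (by rw [norm_neg, norm_eLast hn])

/-- The points may lie both in the unit ball or both outside its closure; in the second case `σ`
maps them to the lower half-space, where the product of the last coordinates is again positive. -/
theorem hH_sigmaBH_formula_general (hn : 0 < n) {x y : EuclideanSpace ℝ (Fin n)}
    (hxy : 0 < (1 - ‖x‖ ^ 2) * (1 - ‖y‖ ^ 2)) (c : ℝ) :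
    hH c (sigmaBH x) (sigmaBH y) =
      Real.log (1 + 2 * c * ‖x - y‖ / √((1 - ‖x‖ ^ 2) * (1 - ‖y‖ ^ 2))) := by
  have hx : x ≠ -eLast n := ne_neg_eLast_of_norm_ne_one hn fun h ↦ by simp [h] at hxy
  have hy : y ≠ -eLast n := ne_neg_eLast_of_norm_ne_one hn fun h ↦ by simp [h] at hxy
  rw [hH, mul_div_assoc, norm_sigmaBH_sub_div_sqrt_lastCoord hn hx hy, ← mul_div_assoc,
    mul_left_comm, ← mul_assoc]

end HalfSpace

theorem one_sub_norm_sq_pos {E : Type*} [SeminormedAddGroup E] {x : E} (hx : ‖x‖ < 1) :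
    0 < 1 - ‖x‖ ^ 2 :=
  sub_pos.mpr (pow_lt_one₀ (norm_nonneg x) hx two_ne_zero)

theorem hH_sigmaBH_formula (n : ℕ) (hn : 2 ≤ n)
    (x y : EuclideanSpace ℝ (Fin n)) (hx : ‖x‖ < 1) (hy : ‖y‖ < 1)
    (c : ℝ) (hc : 0 < c) :
    hH c (sigmaBH x) (sigmaBH y) =
      Real.log (1 + 2 * c * ‖x - y‖ / Real.sqrt ((1 - ‖x‖ ^ 2) * (1 - ‖y‖ ^ 2))) := by
  exact hH_sigmaBH_formula_general (by lia)
    (mul_pos (one_sub_norm_sq_pos hx) (one_sub_norm_sq_pos hy)) c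
end
end

section
/- Let n ≥ 2, a ∈ 𝔹ⁿ \ {0}, c > 0, and let σ_a be the inversion in the sphere S^{n−1}(a*, r) (so σ_a maps 𝔹ⁿ onto 𝔹ⁿ with σ_a(0) = a and σ_a(a) = 0). Then for all x, y ∈ 𝔹ⁿ \ {0}: h_{𝔹ⁿ\{a},c}(σ_a(x), σ_a(y)) ≤ (1 + |a|)·h_{𝔹ⁿ\{0},c}(x, y). -/
noncomputable section

open Real Filter

/-!
On the ball, `σ_a` satisfies the Möbius identity `|σ_a x - σ_a y| = √(|σ_a' x| |σ_a' y|) |x - y|`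
with `|σ_a' x| = (1 - |a|²) / [a, x]²`, where `[a, x]² = |x - a|² + (1 - |a|²)(1 - |x|²)`.
The square root of boundary distances in the denominator of `h` therefore reduces the theorem to
the one-point estimate `|σ_a' x| d₀(x) ≤ (1 + |a|) d_a(σ_a x)`, after which Bernoulli's inequality
takes the factor `1 + |a|` out of the logarithm.
-/

section HyperbolicType

/-- The hyperbolic-type distance `h_{G,c}`, with the distance to the boundary of `G` replaced by an
arbitrary weight `δ`. -/
def hyperbolicTypeDist {X : Type*} [PseudoMetricSpace X] (δ : X → ℝ) (c : ℝ) (x y : X) : ℝ :=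
  log (1 + c * dist x y / √(δ x * δ y))

lemma log_one_add_mul_le {p s : ℝ} (hp : 1 ≤ p) (hps : 0 < 1 + p * s) :
    log (1 + p * s) ≤ p * log (1 + s) := by
  have hs : -1 < s := by nlinarith
  rw [← log_rpow (by linarith)]
  exact log_le_log hps (one_add_mul_self_le_rpow_one_add hs.le hp)

variable {X Y : Type*} [PseudoMetricSpace X] [PseudoMetricSpace Y]

/- If `x' = f x` and `y' = f y` for a Möbius map `f`, the distance hypothesis holds with
`p = |f' x|` and `q = |f' y|`. -/
lemma hyperbolicTypeDist_le_mul_of_dist_le {δ : X → ℝ} {δ' : Y → ℝ} {c L p q : ℝ} {x y : X}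
    {x' y' : Y} (hc : 0 ≤ c) (hL : 1 ≤ L) (hp : 0 < p) (hq : 0 < q) (hδx : 0 < δ x)
    (hδy : 0 < δ y) (hdist : dist x' y' ≤ √(p * q) * dist x y)
    (hx : p * δ x ≤ L * δ' x') (hy : q * δ y ≤ L * δ' y') :
    hyperbolicTypeDist δ' c x' y' ≤ L * hyperbolicTypeDist δ c x y := by
  have hL0 : 0 < L := by linarith
  have hδx' : 0 < δ' x' := pos_of_mul_pos_right ((mul_pos hp hδx).trans_le hx) hL0.le
  have hδy' : 0 < δ' y' := pos_of_mul_pos_right ((mul_pos hq hδy).trans_le hy) hL0.le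
  have hsqrt : √(p * q) * √(δ x * δ y) ≤ L * √(δ' x' * δ' y') :=
    calc √(p * q) * √(δ x * δ y) = √((p * δ x) * (q * δ y)) := by
          rw [← sqrt_mul (by positivity)]; ring_nf
      _ ≤ √((L * δ' x') * (L * δ' y')) := by gcongr
      _ = √(L ^ 2 * (δ' x' * δ' y')) := by ring_nf
      _ = L * √(δ' x' * δ' y') := by rw [sqrt_mul (by positivity), sqrt_sq hL0.le]
  have hratio : dist x' y' / √(δ' x' * δ' y') ≤ L * (dist x y / √(δ x * δ y)) := by
    rw [← mul_div_assoc, div_le_div_iff₀ (by positivity) (by positivity)]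
    calc dist x' y' * √(δ x * δ y) ≤ √(p * q) * dist x y * √(δ x * δ y) := by gcongr
      _ = √(p * q) * √(δ x * δ y) * dist x y := by ring
      _ ≤ L * √(δ' x' * δ' y') * dist x y := by gcongr
      _ = L * dist x y * √(δ' x' * δ' y') := by ring
  calc hyperbolicTypeDist δ' c x' y'
      ≤ log (1 + L * (c * dist x y / √(δ x * δ y))) := by
        refine log_le_log (by positivity) ?_
        rw [mul_div_assoc, mul_div_assoc, mul_left_comm L c]
        gcongr
    _ ≤ L * hyperbolicTypeDist δ c x y := log_one_add_mul_le hL (by positivity)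

end HyperbolicType

lemma min_one_sub_le_one_add_mul {s t : ℝ} (hs0 : 0 ≤ s) (hs1 : s ≤ 1) (ht0 : 0 ≤ t)
    (ht1 : t ≤ 1) : min t (1 - t) ≤ (1 + s) * t * (1 - s * t) := by
  rcases le_total ((1 + s) * t) 1 with h | h
  · calc min t (1 - t) ≤ t := min_le_left _ _
      _ ≤ t + s * t * (1 - (1 + s) * t) :=
        le_add_of_nonneg_right (mul_nonneg (by positivity) (sub_nonneg.2 h))
      _ = (1 + s) * t * (1 - s * t) := by ring
  · have hst : s * t ≤ t := mul_le_of_le_one_left ht0 hs1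
    calc min t (1 - t) ≤ 1 - t := min_le_right _ _
      _ ≤ 1 - s * t := by linarith
      _ ≤ (1 + s) * t * (1 - s * t) := le_mul_of_one_le_left (by linarith) h

variable {E : Type*} [NormedAddCommGroup E]

lemma one_sub_norm_sq_pos_s9 {a : E} (ha : ‖a‖ < 1) : 0 < 1 - ‖a‖ ^ 2 :=
  sub_pos.2 (pow_lt_one₀ (norm_nonneg a) ha two_ne_zero)

lemma one_sub_norm_sq_nonneg {a : E} (ha : ‖a‖ ≤ 1) : 0 ≤ 1 - ‖a‖ ^ 2 :=
  sub_nonneg.2 (pow_le_one₀ (norm_nonneg a) ha)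

lemma inv_norm_sq_sub_one_nonneg {a : E} (ha : ‖a‖ ≤ 1) (ha0 : a ≠ 0) :
    0 ≤ (‖a‖ ^ 2)⁻¹ - 1 :=
  sub_nonneg.2 ((one_le_inv₀ (by positivity)).2 (pow_le_one₀ (norm_nonneg a) ha))

section AhlforsBracket

/-- The Ahlfors bracket `[a, x] = √(|x - a|² + (1 - |a|²)(1 - |x|²))`, the denominator in the
formulas for the Möbius self-maps of the unit ball. -/
def ahlforsBracket (a x : E) : ℝ :=
  √(‖x - a‖ ^ 2 + (1 - ‖a‖ ^ 2) * (1 - ‖x‖ ^ 2))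

lemma one_sub_norm_mul_norm_sq_le (a x : E) :
    (1 - ‖a‖ * ‖x‖) ^ 2 ≤ ‖x - a‖ ^ 2 + (1 - ‖a‖ ^ 2) * (1 - ‖x‖ ^ 2) :=
  calc (1 - ‖a‖ * ‖x‖) ^ 2 = (‖x‖ - ‖a‖) ^ 2 + (1 - ‖a‖ ^ 2) * (1 - ‖x‖ ^ 2) := by ring
    _ ≤ ‖x - a‖ ^ 2 + (1 - ‖a‖ ^ 2) * (1 - ‖x‖ ^ 2) := by
      gcongr ?_ + _
      exact sq_le_sq.2 ((abs_norm_sub_norm_le x a).trans (le_abs_self _))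

lemma ahlforsBracket_sq (a x : E) :
    ahlforsBracket a x ^ 2 = ‖x - a‖ ^ 2 + (1 - ‖a‖ ^ 2) * (1 - ‖x‖ ^ 2) :=
  sq_sqrt ((sq_nonneg _).trans (one_sub_norm_mul_norm_sq_le a x))

lemma ahlforsBracket_nonneg (a x : E) : 0 ≤ ahlforsBracket a x :=
  sqrt_nonneg _

lemma one_sub_norm_mul_norm_le_ahlforsBracket (a x : E) :
    1 - ‖a‖ * ‖x‖ ≤ ahlforsBracket a x :=
  le_sqrt_of_sq_le (one_sub_norm_mul_norm_sq_le a x)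

lemma ahlforsBracket_pos {a x : E} (ha : ‖a‖ < 1) (hx : ‖x‖ < 1) : 0 < ahlforsBracket a x :=
  (sub_pos.2 (mul_lt_one_of_nonneg_of_lt_one_left (norm_nonneg a) ha hx.le)).trans_le
    (one_sub_norm_mul_norm_le_ahlforsBracket a x)

lemma ahlforsBracket_zero_right (a : E) : ahlforsBracket a 0 = 1 := by
  simp [ahlforsBracket]

lemma ahlforsBracket_self {a : E} (ha : ‖a‖ ≤ 1) : ahlforsBracket a a = 1 - ‖a‖ ^ 2 := by
  have h : 0 ≤ 1 - ‖a‖ ^ 2 := one_sub_norm_sq_nonneg ha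
  rw [ahlforsBracket, sub_self, norm_zero, zero_pow two_ne_zero, zero_add, sqrt_mul_self h]

lemma norm_sub_mul_one_add_le_mul_ahlforsBracket {a x : E} (ha : ‖a‖ ≤ 1) (hx : ‖x‖ ≤ 1) :
    ‖x - a‖ * (1 + ‖a‖ * ‖x‖) ≤ (‖a‖ + ‖x‖) * ahlforsBracket a x := by
  have ha' : 0 ≤ 1 - ‖a‖ ^ 2 := one_sub_norm_sq_nonneg ha
  have hx' : 0 ≤ 1 - ‖x‖ ^ 2 := one_sub_norm_sq_nonneg hx
  have htri : ‖x - a‖ ^ 2 ≤ (‖a‖ + ‖x‖) ^ 2 := by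
    gcongr
    exact (norm_sub_le x a).trans_eq (add_comm _ _)
  refine le_of_sq_le_sq ?_ (mul_nonneg (by positivity) (ahlforsBracket_nonneg a x))
  have hgap : ((‖a‖ + ‖x‖) * ahlforsBracket a x) ^ 2 - (‖x - a‖ * (1 + ‖a‖ * ‖x‖)) ^ 2 =
      (1 - ‖a‖ ^ 2) * (1 - ‖x‖ ^ 2) * ((‖a‖ + ‖x‖) ^ 2 - ‖x - a‖ ^ 2) := by
    rw [mul_pow, ahlforsBracket_sq]; ring
  exact sub_nonneg.1 (hgap ▸ mul_nonneg (mul_nonneg ha' hx') (sub_nonneg.2 htri))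

end AhlforsBracket

/-- The distance from a point `x` of the open unit ball `𝔹` to the boundary of `𝔹 \ {p}`. -/
def puncturedBallBoundaryDist (p x : E) : ℝ :=
  min ‖x - p‖ (1 - ‖x‖)

lemma puncturedBallBoundaryDist_pos {p x : E} (hxp : x ≠ p) (hx : ‖x‖ < 1) :
    0 < puncturedBallBoundaryDist p x :=
  lt_min (norm_sub_pos_iff.2 hxp) (sub_pos.2 hx)

section BallInversion

variable [InnerProductSpace ℝ E] {a x y : E}

/-- The inversion `σ_a` in the sphere with center `a* = a/|a|²` and radius `√(1/|a|² - 1)`, which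
is orthogonal to the unit sphere. -/
def ballInversion (a : E) : E → E :=
  EuclideanGeometry.inversion ((‖a‖ ^ 2)⁻¹ • a) √((‖a‖ ^ 2)⁻¹ - 1)

lemma ballInversion_eq (ha : ‖a‖ ≤ 1) (ha0 : a ≠ 0) (x : E) :
    ballInversion a x = (‖a‖ ^ 2)⁻¹ • a +
      (((‖a‖ ^ 2)⁻¹ - 1) / ‖x - (‖a‖ ^ 2)⁻¹ • a‖ ^ 2) • (x - (‖a‖ ^ 2)⁻¹ • a) := by
  rw [ballInversion, EuclideanGeometry.inversion, div_pow,
    sq_sqrt (inv_norm_sq_sub_one_nonneg ha ha0), dist_eq_norm, vsub_eq_sub, vadd_eq_add, add_comm]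

lemma norm_sub_inv_norm_sq_smul_eq (ha0 : a ≠ 0) (x : E) :
    ‖x - (‖a‖ ^ 2)⁻¹ • a‖ = ahlforsBracket a x / ‖a‖ := by
  have hnorm : 0 < ‖a‖ := norm_pos_iff.2 ha0
  rw [← sq_eq_sq₀ (norm_nonneg _) (div_nonneg (ahlforsBracket_nonneg a x) hnorm.le), div_pow,
    ahlforsBracket_sq, norm_sub_sq_real, norm_sub_sq_real, inner_smul_right, norm_smul, norm_inv,
    norm_pow, norm_norm]
  field_simp
  ring

lemma ballInversion_zero (ha : ‖a‖ ≤ 1) (ha0 : a ≠ 0) : ballInversion a 0 = a := by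
  have hnorm : ‖a‖ ≠ 0 := norm_ne_zero_iff.2 ha0
  rw [ballInversion_eq ha ha0, norm_sub_inv_norm_sq_smul_eq ha0, ahlforsBracket_zero_right]
  match_scalars
  field_simp
  ring

lemma ballInversion_self (ha : ‖a‖ < 1) (ha0 : a ≠ 0) : ballInversion a a = 0 := by
  have hnorm : ‖a‖ ≠ 0 := norm_ne_zero_iff.2 ha0
  have hsub : 1 - ‖a‖ ^ 2 ≠ 0 := (one_sub_norm_sq_pos_s9 ha).ne'
  rw [ballInversion_eq ha.le ha0, norm_sub_inv_norm_sq_smul_eq ha0, ahlforsBracket_self ha.le]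
  match_scalars
  field_simp
  ring

lemma dist_ballInversion_ballInversion (ha : ‖a‖ < 1) (ha0 : a ≠ 0) (hx : ‖x‖ < 1)
    (hy : ‖y‖ < 1) :
    dist (ballInversion a x) (ballInversion a y) =
      (1 - ‖a‖ ^ 2) / (ahlforsBracket a x * ahlforsBracket a y) * dist x y := by
  have hnorm : 0 < ‖a‖ := norm_pos_iff.2 ha0
  have ne_center {z : E} (hz : ‖z‖ < 1) : z ≠ (‖a‖ ^ 2)⁻¹ • a := by
    rw [← sub_ne_zero, ← norm_pos_iff, norm_sub_inv_norm_sq_smul_eq ha0]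
    exact div_pos (ahlforsBracket_pos ha hz) hnorm
  rw [ballInversion, EuclideanGeometry.dist_inversion_inversion (ne_center hx) (ne_center hy),
    sq_sqrt (inv_norm_sq_sub_one_nonneg ha.le ha0), dist_eq_norm x, dist_eq_norm y,
    norm_sub_inv_norm_sq_smul_eq ha0, norm_sub_inv_norm_sq_smul_eq ha0]
  field_simp

lemma dist_ballInversion_eq_sqrt_mul (ha : ‖a‖ < 1) (ha0 : a ≠ 0) (hx : ‖x‖ < 1)
    (hy : ‖y‖ < 1) :
    dist (ballInversion a x) (ballInversion a y) =
      √((1 - ‖a‖ ^ 2) / ahlforsBracket a x ^ 2 * ((1 - ‖a‖ ^ 2) / ahlforsBracket a y ^ 2)) *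
        dist x y := by
  have ha' : 0 < 1 - ‖a‖ ^ 2 := one_sub_norm_sq_pos_s9 ha
  have hbx := ahlforsBracket_pos ha hx
  have hby := ahlforsBracket_pos ha hy
  rw [dist_ballInversion_ballInversion ha ha0 hx hy, div_mul_div_comm, ← sq, ← mul_pow, ← div_pow,
    sqrt_sq (by positivity)]

lemma norm_ballInversion_sub_self (ha : ‖a‖ < 1) (ha0 : a ≠ 0) (hx : ‖x‖ < 1) :
    ‖ballInversion a x - a‖ = (1 - ‖a‖ ^ 2) * ‖x‖ / ahlforsBracket a x := by
  have h := dist_ballInversion_ballInversion ha ha0 hx (y := 0) (by simp)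
  rwa [ballInversion_zero ha.le ha0, ahlforsBracket_zero_right, mul_one, dist_zero_right,
    dist_eq_norm, div_mul_eq_mul_div] at h

lemma norm_ballInversion (ha : ‖a‖ < 1) (ha0 : a ≠ 0) (hx : ‖x‖ < 1) :
    ‖ballInversion a x‖ = ‖x - a‖ / ahlforsBracket a x := by
  have ha' : 1 - ‖a‖ ^ 2 ≠ 0 := (one_sub_norm_sq_pos_s9 ha).ne'
  have h := dist_ballInversion_ballInversion ha ha0 hx ha
  rwa [ballInversion_self ha ha0, ahlforsBracket_self ha.le, dist_zero_right, dist_eq_norm,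
    div_mul_cancel_right₀ ha', inv_mul_eq_div] at h

lemma one_sub_norm_ballInversion_sq (ha : ‖a‖ < 1) (ha0 : a ≠ 0) (hx : ‖x‖ < 1) :
    1 - ‖ballInversion a x‖ ^ 2 = (1 - ‖a‖ ^ 2) * (1 - ‖x‖ ^ 2) / ahlforsBracket a x ^ 2 := by
  have hb := ahlforsBracket_pos ha hx
  rw [norm_ballInversion ha ha0 hx, div_pow, eq_div_iff (by positivity), sub_mul,
    div_mul_cancel₀ _ (by positivity), ahlforsBracket_sq]
  ring

lemma norm_ballInversion_lt_one (ha : ‖a‖ < 1) (ha0 : a ≠ 0) (hx : ‖x‖ < 1) :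
    ‖ballInversion a x‖ < 1 := by
  have ha' : 0 < 1 - ‖a‖ ^ 2 := one_sub_norm_sq_pos_s9 ha
  have hx' : 0 < 1 - ‖x‖ ^ 2 := one_sub_norm_sq_pos_s9 hx
  have hb := ahlforsBracket_pos ha hx
  have hsq : 0 < 1 - ‖ballInversion a x‖ ^ 2 := by
    rw [one_sub_norm_ballInversion_sq ha ha0 hx]; positivity
  exact (sq_lt_one_iff₀ (norm_nonneg _)).1 (sub_pos.1 hsq)

lemma norm_ballInversion_le (ha : ‖a‖ < 1) (ha0 : a ≠ 0) (hx : ‖x‖ < 1) :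
    ‖ballInversion a x‖ ≤ (‖a‖ + ‖x‖) / (1 + ‖a‖ * ‖x‖) := by
  rw [norm_ballInversion ha ha0 hx,
    div_le_div_iff₀ (ahlforsBracket_pos ha hx) (by positivity)]
  exact norm_sub_mul_one_add_le_mul_ahlforsBracket ha.le hx.le

lemma one_sub_norm_mul_min_le_norm_ballInversion_sub (ha : ‖a‖ < 1) (ha0 : a ≠ 0)
    (hx : ‖x‖ < 1) :
    (1 - ‖a‖) * min ‖x‖ (1 - ‖x‖) ≤ ahlforsBracket a x ^ 2 * ‖ballInversion a x - a‖ := by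
  have ha' : 0 ≤ 1 - ‖a‖ := sub_nonneg.2 ha.le
  have hb := ahlforsBracket_pos ha hx
  calc (1 - ‖a‖) * min ‖x‖ (1 - ‖x‖)
      ≤ (1 - ‖a‖) * ((1 + ‖a‖) * ‖x‖ * (1 - ‖a‖ * ‖x‖)) := by
        refine mul_le_mul_of_nonneg_left ?_ ha'
        exact min_one_sub_le_one_add_mul (norm_nonneg a) ha.le (norm_nonneg x) hx.le
    _ ≤ (1 - ‖a‖) * ((1 + ‖a‖) * ‖x‖ * ahlforsBracket a x) := by
        gcongr
        exact one_sub_norm_mul_norm_le_ahlforsBracket a x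
    _ = ahlforsBracket a x ^ 2 * ‖ballInversion a x - a‖ := by
        rw [norm_ballInversion_sub_self ha ha0 hx]
        field_simp
        ring

lemma one_sub_norm_mul_one_sub_norm_le_ballInversion (ha : ‖a‖ < 1) (ha0 : a ≠ 0) (hx : ‖x‖ < 1) :
    (1 - ‖a‖) * (1 - ‖x‖) ≤ ahlforsBracket a x ^ 2 * (1 - ‖ballInversion a x‖) := by
  have hb := ahlforsBracket_pos ha hx
  have hσ : 0 ≤ 1 - ‖ballInversion a x‖ := sub_nonneg.2 (norm_ballInversion_lt_one ha ha0 hx).le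
  have hle : 1 + ‖ballInversion a x‖ ≤ (1 + ‖a‖) * (1 + ‖x‖) :=
    calc 1 + ‖ballInversion a x‖ ≤ 1 + (‖a‖ + ‖x‖) / (1 + ‖a‖ * ‖x‖) := by
          gcongr; exact norm_ballInversion_le ha ha0 hx
      _ ≤ 1 + (‖a‖ + ‖x‖) := by
          gcongr; exact div_le_self (by positivity) (le_add_of_nonneg_right (by positivity))
      _ ≤ (1 + ‖a‖) * (1 + ‖x‖) := by linarith [mul_nonneg (norm_nonneg a) (norm_nonneg x)]
  refine le_of_mul_le_mul_right ?_ (by positivity : 0 < (1 + ‖a‖) * (1 + ‖x‖))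
  calc (1 - ‖a‖) * (1 - ‖x‖) * ((1 + ‖a‖) * (1 + ‖x‖))
      = (1 - ‖a‖ ^ 2) * (1 - ‖x‖ ^ 2) := by ring
    _ = ahlforsBracket a x ^ 2 * (1 - ‖ballInversion a x‖ ^ 2) := by
        rw [one_sub_norm_ballInversion_sq ha ha0 hx, mul_div_cancel₀ _ (by positivity)]
    _ = ahlforsBracket a x ^ 2 * (1 - ‖ballInversion a x‖) * (1 + ‖ballInversion a x‖) := by ring
    _ ≤ _ := by gcongr

lemma mul_puncturedBallBoundaryDist_zero_le_ballInversion (ha : ‖a‖ < 1) (ha0 : a ≠ 0)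
    (hx : ‖x‖ < 1) :
    (1 - ‖a‖ ^ 2) / ahlforsBracket a x ^ 2 * puncturedBallBoundaryDist 0 x ≤
      (1 + ‖a‖) * puncturedBallBoundaryDist a (ballInversion a x) := by
  have hb := ahlforsBracket_pos ha hx
  have ha' : 0 ≤ 1 - ‖a‖ := sub_nonneg.2 ha.le
  have key : (1 - ‖a‖) * puncturedBallBoundaryDist 0 x ≤
      ahlforsBracket a x ^ 2 * puncturedBallBoundaryDist a (ballInversion a x) := by
    rw [puncturedBallBoundaryDist, puncturedBallBoundaryDist, sub_zero,
      mul_min_of_nonneg _ _ (sq_nonneg (ahlforsBracket a x))]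
    exact le_min (one_sub_norm_mul_min_le_norm_ballInversion_sub ha ha0 hx)
      ((mul_le_mul_of_nonneg_left (min_le_right _ _) ha').trans
        (one_sub_norm_mul_one_sub_norm_le_ballInversion ha ha0 hx))
  calc (1 - ‖a‖ ^ 2) / ahlforsBracket a x ^ 2 * puncturedBallBoundaryDist 0 x
      = (1 + ‖a‖) * ((1 - ‖a‖) * puncturedBallBoundaryDist 0 x / ahlforsBracket a x ^ 2) := by ring
    _ ≤ (1 + ‖a‖) * puncturedBallBoundaryDist a (ballInversion a x) := by
        gcongr
        exact (div_le_iff₀' (by positivity)).2 key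

theorem punctured_ball_lipschitz_general (ha : ‖a‖ < 1) (ha0 : a ≠ 0) {c : ℝ} (hc : 0 ≤ c)
    (hx : ‖x‖ < 1) (hx0 : x ≠ 0) (hy : ‖y‖ < 1) (hy0 : y ≠ 0) :
    hyperbolicTypeDist (puncturedBallBoundaryDist a) c (ballInversion a x) (ballInversion a y) ≤
      (1 + ‖a‖) * hyperbolicTypeDist (puncturedBallBoundaryDist 0) c x y := by
  have hfactor {z : E} (hz : ‖z‖ < 1) : 0 < (1 - ‖a‖ ^ 2) / ahlforsBracket a z ^ 2 :=
    div_pos (one_sub_norm_sq_pos_s9 ha) (pow_pos (ahlforsBracket_pos ha hz) 2)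
  exact hyperbolicTypeDist_le_mul_of_dist_le hc (le_add_of_nonneg_right (norm_nonneg a))
    (hfactor hx) (hfactor hy)
    (puncturedBallBoundaryDist_pos hx0 hx) (puncturedBallBoundaryDist_pos hy0 hy)
    (dist_ballInversion_eq_sqrt_mul ha ha0 hx hy).le
    (mul_puncturedBallBoundaryDist_zero_le_ballInversion ha ha0 hx)
    (mul_puncturedBallBoundaryDist_zero_le_ballInversion ha ha0 hy)

end BallInversion

lemma hP_eq_hyperbolicTypeDist {n : ℕ} (c : ℝ) (p x y : EuclideanSpace ℝ (Fin n)) :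
    hP c p x y = hyperbolicTypeDist (puncturedBallBoundaryDist p) c x y := by
  rw [hP, hyperbolicTypeDist, dist_eq_norm, puncturedBallBoundaryDist, puncturedBallBoundaryDist]

lemma sigmaInv_eq_ballInversion {n : ℕ} {a : EuclideanSpace ℝ (Fin n)} (ha : ‖a‖ ≤ 1)
    (ha0 : a ≠ 0) (x : EuclideanSpace ℝ (Fin n)) : sigmaInv a x = ballInversion a x :=
  (ballInversion_eq ha ha0 x).symm

theorem punctured_ball_lipschitz (n : ℕ) (hn : 2 ≤ n)
    (a : EuclideanSpace ℝ (Fin n)) (haB : ‖a‖ < 1) (ha0 : a ≠ 0)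
    (c : ℝ) (hc : 0 < c)
    (x y : EuclideanSpace ℝ (Fin n))
    (hx : ‖x‖ < 1) (hx0 : x ≠ 0) (hy : ‖y‖ < 1) (hy0 : y ≠ 0) :
    hP c a (sigmaInv a x) (sigmaInv a y) ≤ (1 + ‖a‖) * hP c 0 x y := by
  simpa only [hP_eq_hyperbolicTypeDist, sigmaInv_eq_ballInversion haB.le ha0] using
    punctured_ball_lipschitz_general haB ha0 hc.le hx hx0 hy hy0
end
end
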